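/- For every u ∈ ℂ with 0 < |u| ≤ u_c the following identity holds: A(u) = t_c·u_c·( Δ²A(u) + (Z₁(u_c) + ΔZ₀(u))·ΔA(u) + a₁·(ΔZ(u,u_c) − ΔZ₀(u)) ) + ν_c·t_c·( A(u)/u_c + ((Z₀(u_c) − 1)/u_c + Z₁(u))·A(u) + a₀·((Z(u,u_c) − Z₀(u))/u_c − Z₁(u)) ), where ΔZ₀(u) = (Z₀(u) − 1)/u, ΔA(u) = (A(u) − a₀)/u, Δ²A(u) = (A(u) − a₀ − a₁·u)/u², Z(u,u_c) := Σ_{p,q≥0} z_{p,q}·u^p·u_c^q and ΔZ(u,u_c) := (Z(u,u_c) − Z(0,u_c))/u (these series converge absolutely), Z₀(u_c) := Ẑ₀(1), Z₁(u_c) := Ẑ₁(1), and on the disk |u| ≤ u_c the functions are given by their absolutely convergent power series Z₀(u) = Σ_p z_{p,0}·u^p, Z₁(u) = Σ_p z'_p·u^p (the Taylor coefficients of Z₁), A(u) = Σ_p a_p·u^p. -/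

import Mathlib

noncomputable def nuc : ℝ := 1 + 2 * Real.sqrt 7

noncomputable def tc : ℝ := Real.sqrt 10 / (8 * (7 + Real.sqrt 7) ^ ((3:ℝ)/2))

noncomputable def uc : ℝ := (6/5) * (7 + Real.sqrt 7) * tc

/-- The rational parametrization `û` of the `u`-variable. -/
noncomputable def uhat (H : ℂ) : ℂ :=
  ((uc : ℂ) / 3) * H * (10 - 12 * H + 6 * H ^ 2 - H ^ 3)

/-- The rational parametrization `Ẑ₀`. -/
noncomputable def Z0hat (H : ℂ) : ℂ :=
  (1/10) * (1 - (1 - (Real.sqrt 7 : ℂ)) * H + 3 * H ^ 2 - H ^ 3)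
    * (10 - 12 * H + 6 * H ^ 2 - H ^ 3)

/-- The rational parametrization `Ẑ₁`. -/
noncomputable def Z1hat (H : ℂ) : ℂ :=
  (3 / (10 * (uc : ℂ))) *
    ((Real.sqrt 7 : ℂ) - 1 + H - 3 * (4 - 3 * H + H ^ 2) / (10 - 12 * H + 6 * H ^ 2 - H ^ 3))

/-- The rational parametrization `Â`. -/
noncomputable def Ahat (H : ℂ) : ℂ :=
  (1/10) * ((((3:ℝ)/2) ^ ((7:ℝ)/3) : ℝ) : ℂ) * (9 - 8 * H + 3 * H ^ 2) / (3 - 3 * H + H ^ 2) ^ 2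
section PowerSeries

open Filter Topology Set

/-- The sum of a power series that converges absolutely at radius `r`. -/
theorem hasFPowerSeriesOnBall_tsum {𝕜 : Type*} [NontriviallyNormedField 𝕜] [CompleteSpace 𝕜]
    {c : ℕ → 𝕜} {r : ℝ} (hr : 0 < r) (hc : Summable fun n => ‖c n‖ * r ^ n) :
    HasFPowerSeriesOnBall (fun x => ∑' n, c n * x ^ n)
      (FormalMultilinearSeries.ofScalars 𝕜 c) 0 (ENNReal.ofReal r) := by
  have hle : ENNReal.ofReal r ≤ (FormalMultilinearSeries.ofScalars 𝕜 c).radius := by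
    refine FormalMultilinearSeries.le_radius_of_summable _ ?_
    simpa [FormalMultilinearSeries.ofScalars_norm, Real.coe_toNNReal _ hr.le] using hc
  have hpos : 0 < ENNReal.ofReal r := ENNReal.ofReal_pos.2 hr
  have h := (FormalMultilinearSeries.hasFPowerSeriesOnBall _ (hpos.trans_le hle)).mono hpos hle
  refine h.congr fun x _ => ?_
  simp [FormalMultilinearSeries.sum, mul_comm]

theorem analyticOnNhd_tsum {𝕜 : Type*} [NontriviallyNormedField 𝕜] [CompleteSpace 𝕜]
    {c : ℕ → 𝕜} {r : ℝ} (hr : 0 < r) (hc : Summable fun n => ‖c n‖ * r ^ n) :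
    AnalyticOnNhd 𝕜 (fun x => ∑' n, c n * x ^ n) (Metric.ball 0 r) := by
  have h := (hasFPowerSeriesOnBall_tsum hr hc).analyticOnNhd
  rwa [Metric.eball_ofReal] at h

theorem continuousOn_tsum_closedBall {c : ℕ → ℂ} {r : ℝ} (hc : Summable fun n => ‖c n‖ * r ^ n) :
    ContinuousOn (fun x => ∑' n, c n * x ^ n) (Metric.closedBall 0 r) := by
  refine continuousOn_tsum (fun n => by fun_prop) hc fun n x hx => ?_
  rw [norm_mul, norm_pow]
  gcongr
  simpa using hx

theorem summable_norm_mul_pow {c : ℕ → ℝ} {x : ℝ} (hx : 0 ≤ x) (h : Summable fun n => c n * x ^ n) :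
    Summable fun n => ‖c n‖ * x ^ n := by
  simpa [abs_mul, abs_of_nonneg hx] using h.abs

theorem Summable.mul_pow_of_le {c : ℕ → ℝ} (hc : ∀ n, 0 ≤ c n) {x y : ℝ} (hx : 0 ≤ x) (hxy : x ≤ y)
    (h : Summable fun n => c n * y ^ n) : Summable fun n => c n * x ^ n := by
  refine Summable.of_nonneg_of_le (fun n => mul_nonneg (hc n) (pow_nonneg hx n)) (fun n => ?_) h
  have := hc n
  gcongr

/-- The coefficients of a power series are determined by its values at the points of a sequence of
positive reals tending to `0`. -/
theorem coeff_eq_of_frequently_eq {c d : ℕ → ℝ} {r : ℝ} (hr : 0 < r)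
    (hc : Summable fun n => c n * r ^ n) (hd : Summable fun n => d n * r ^ n)
    (h : ∃ᶠ x in 𝓝[>] (0 : ℝ), ∑' n, c n * x ^ n = ∑' n, d n * x ^ n) : c = d := by
  have h1 := (hasFPowerSeriesOnBall_tsum hr (summable_norm_mul_pow hr.le hc)).hasFPowerSeriesAt
  have h2 := (hasFPowerSeriesOnBall_tsum hr (summable_norm_mul_pow hr.le hd)).hasFPowerSeriesAt
  have h3 := (h1.analyticAt.frequently_eq_iff_eventually_eq h2.analyticAt).1
    (h.filter_mono (nhdsWithin_mono _ fun x hx => ne_of_gt hx))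
  have h4 := h1.eq_formalMultilinearSeries (h2.congr (h3.mono fun x hx => hx.symm))
  funext n
  simpa [FormalMultilinearSeries.coeff_ofScalars] using congrArg (fun p => p.coeff n) h4

/-- The difference quotients at `0` of a power series tend to its linear coefficient. -/
theorem tendsto_tsum_sub_div {c : ℕ → ℝ} {r : ℝ} (hr : 0 < r)
    (hc : Summable fun n => c n * r ^ n) :
    Tendsto (fun x => (∑' n, c n * x ^ n - c 0) / x) (𝓝[>] 0) (𝓝 (c 1)) := by
  have h1 := (hasFPowerSeriesOnBall_tsum hr
    (summable_norm_mul_pow hr.le hc)).hasFPowerSeriesAt.hasDerivAt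
  rw [FormalMultilinearSeries.ofScalars_apply_eq] at h1
  have h2 := (hasDerivAt_iff_tendsto_slope.1 h1).mono_left
    (nhdsWithin_mono (s := Ioi 0) 0 fun x hx => ne_of_gt hx)
  have h0 : ∑' n, c n * (0 : ℝ) ^ n = c 0 := by
    rw [tsum_eq_single 0 (fun n hn => by simp [hn])]
    simp
  simpa [slope_fun_def_field, h0] using h2

theorem summable_prod_swap_of_nonneg {α β : Type*} {f : α × β → ℝ} (hf : ∀ x, 0 ≤ f x)
    (h1 : ∀ b, Summable fun a => f (a, b)) (h2 : Summable fun b => ∑' a, f (a, b)) :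
    Summable f := by
  have h : Summable fun x : β × α => f x.swap :=
    (summable_prod_of_nonneg fun x => hf x.swap).2 ⟨h1, h2⟩
  exact h.prod_symm

/-- A double series with nonnegative terms obtained by expanding `(x + y) ^ m`. -/
theorem summable_binomial_iff {c : ℕ → ℝ} (hc : ∀ n, 0 ≤ c n) {x y : ℝ} (hx : 0 ≤ x) (hy : 0 ≤ y) :
    (Summable fun m => c m * (x + y) ^ m) ↔
      Summable fun mn : ℕ × ℕ => c mn.1 * (x ^ (mn.1 - mn.2) * mn.1.choose mn.2) * y ^ mn.2 := by
  have hfin (m : ℕ) : HasSum (fun n => c m * (x ^ (m - n) * m.choose n) * y ^ n)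
      (c m * (x + y) ^ m) := by
    have h := hasSum_sum_of_ne_finset_zero (L := .unconditional ℕ) (s := Finset.range (m + 1))
      (f := fun n => c m * (x ^ (m - n) * m.choose n) * y ^ n) (fun n hn => by
        rw [Nat.choose_eq_zero_of_lt (by simpa using hn)]
        simp)
    convert h using 1
    rw [add_comm x y, add_pow, Finset.mul_sum]
    exact Finset.sum_congr rfl fun n _ => by ring
  rw [summable_prod_of_nonneg fun mn => by have := hc mn.1; simp only [Pi.zero_apply]; positivity]
  simp only [(hfin _).tsum_eq, iff_and_self]
  exact fun _ m => (hfin m).summable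

theorem hasSum_binomial {c : ℕ → ℝ} {x y : ℝ}
    (h : Summable fun mn : ℕ × ℕ => c mn.1 * (x ^ (mn.1 - mn.2) * mn.1.choose mn.2) * y ^ mn.2) :
    HasSum (fun n => (∑' m, c m * (x ^ (m - n) * m.choose n)) * y ^ n)
      (∑' m, c m * (x + y) ^ m) := by
  have hfin (m : ℕ) : ∑' n, c m * (x ^ (m - n) * m.choose n) * y ^ n = c m * (x + y) ^ m := by
    rw [tsum_eq_sum (s := Finset.range (m + 1)) (fun n hn => by
        rw [Nat.choose_eq_zero_of_lt (by simpa using hn)]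
        simp), add_comm x y, add_pow, Finset.mul_sum]
    exact Finset.sum_congr rfl fun n _ => by ring
  have h1 := h.prod_symm
  have h2 := h1.prod.hasSum
  have h3 := Summable.tsum_comm (f := fun m n => c m * (x ^ (m - n) * m.choose n) * y ^ n) h
  simp only [hfin] at h3
  simp only [Prod.swap, tsum_mul_right] at h2 h3
  rwa [h3] at h2

/-- A power series with nonnegative coefficients converges on `(0, r')` for some `r' > r` if it
converges on `(0, r)` to a function which is analytic at `r`. -/
theorem exists_summable_of_analyticAt {c : ℕ → ℝ} (hc : ∀ n, 0 ≤ c n) {g : ℝ → ℝ} {r : ℝ}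
    (hr : 0 < r) (hg : AnalyticAt ℝ g r)
    (h : ∀ x ∈ Ioo 0 r, HasSum (fun n => c n * x ^ n) (g x)) :
    ∃ y > r, Summable fun n => c n * y ^ n := by
  obtain ⟨p, s, hp⟩ := hg
  obtain ⟨δ, hδ, hδs⟩ : ∃ δ : ℝ, 0 < δ ∧ ENNReal.ofReal δ ≤ s := by
    obtain ⟨δ, hδ, hδs⟩ := ENNReal.lt_iff_exists_nnreal_btwn.1 hp.r_pos
    exact ⟨δ, by exact_mod_cast hδ, by simpa using hδs.le⟩
  obtain ⟨η, hη, hηr, hηδ⟩ : ∃ η : ℝ, 0 < η ∧ η < r ∧ 3 * η < δ :=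
    ⟨min (r / 2) (δ / 4), by positivity, by linarith [min_le_left (r / 2) (δ / 4)],
      by linarith [min_le_right (r / 2) (δ / 4)]⟩
  have hx0 : 0 < r - η := by linarith
  have hp' := hp.mono (ENNReal.ofReal_pos.2 hδ) hδs
  have hnn : ((‖-η‖₊ : NNReal) : ENNReal) = ENNReal.ofReal η := by
    rw [nnnorm_neg, ← Real.enorm_of_nonneg hη.le]
    rfl
  have hq := hp'.changeOrigin (y := -η) (by
    rw [hnn]
    exact (ENNReal.ofReal_lt_ofReal_iff hδ).2 (by linarith))
  rw [hnn, ← ENNReal.ofReal_sub _ hη.le, ← sub_eq_add_neg] at hq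
  set q := p.changeOrigin (-η)
  set b : ℕ → ℝ := fun n => ∑' m, c m * ((r - η) ^ (m - n) * m.choose n)
  have hb : HasFPowerSeriesAt g (FormalMultilinearSeries.ofScalars ℝ b) (r - η) := by
    rw [hasFPowerSeriesAt_iff]
    filter_upwards [Ioo_mem_nhds (neg_lt_zero.2 (lt_min hη hx0)) (lt_min hη hx0)] with y hy
    have hy' : |y| < min η (r - η) := abs_lt.2 hy
    have hyη := hy'.trans_le (min_le_left _ _)
    have hyx := hy'.trans_le (min_le_right _ _)
    have hlow := (abs_lt.1 hyx).1
    have hup := (abs_lt.1 hyη).2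
    have hs := (summable_binomial_iff hc hx0.le (abs_nonneg y)).1
      (h (r - η + |y|) ⟨by positivity, by linarith⟩).summable
    have hs' : Summable fun mn : ℕ × ℕ =>
        c mn.1 * ((r - η) ^ (mn.1 - mn.2) * mn.1.choose mn.2) * y ^ mn.2 := by
      refine Summable.of_norm (hs.congr fun mn => ?_)
      rw [norm_mul, norm_pow, Real.norm_eq_abs y, Real.norm_of_nonneg]
      have := hc mn.1
      positivity
    have h1 := hasSum_binomial hs'
    rw [(h (r - η + y) ⟨by linarith, by linarith⟩).tsum_eq] at h1
    simpa [FormalMultilinearSeries.coeff_ofScalars, mul_comm, b] using h1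
  have hbq : ∀ n, q.coeff n = b n := fun n => by
    rw [hq.hasFPowerSeriesAt.eq_formalMultilinearSeries hb, FormalMultilinearSeries.coeff_ofScalars]
  refine ⟨r - η + 3 / 2 * η, by linarith, ?_⟩
  have hsum := (hq.hasSum (y := 3 / 2 * η) (by
    rw [Metric.eball_ofReal, Metric.mem_ball, dist_zero_right, Real.norm_of_nonneg (by positivity)]
    linarith)).summable
  simp only [FormalMultilinearSeries.apply_eq_pow_smul_coeff, hbq, smul_eq_mul] at hsum
  rw [summable_binomial_iff hc hx0.le (by positivity)]
  have hcol : ∀ n, Summable fun m => c m * ((r - η) ^ (m - n) * m.choose n) := fun n => by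
    have hs := (summable_binomial_iff hc hx0.le (half_pos hη).le).1
      (h (r - η + η / 2) ⟨by positivity, by linarith⟩).summable
    have h1 := hs.prod_symm.prod_factor n
    simp only [Prod.swap] at h1
    exact (summable_mul_right_iff (pow_ne_zero n (half_pos hη).ne')).1 h1
  refine summable_prod_swap_of_nonneg (fun mn => ?_) (fun n => ?_) ?_
  · have := hc mn.1
    positivity
  · exact (hcol n).mul_right ((3 / 2 * η) ^ n)
  · simp only [tsum_mul_right]
    exact hsum.congr fun n => mul_comm _ _

/-- **Pringsheim's theorem**: a power series with nonnegative coefficients which represents, near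
`0`, a function analytic along `(0, R)`, converges to this function on all of `(0, R)`. -/
theorem hasSum_of_analyticOnNhd_Ioo {c : ℕ → ℝ} (hc : ∀ n, 0 ≤ c n) {g : ℝ → ℝ} {R ε : ℝ}
    (hε : 0 < ε) (hg : AnalyticOnNhd ℝ g (Ioo 0 R))
    (h : ∀ x ∈ Ioo 0 ε, HasSum (fun n => c n * x ^ n) (g x)) :
    ∀ x ∈ Ioo 0 R, HasSum (fun n => c n * x ^ n) (g x) := by
  have key : ∀ r ≤ R, (∀ x ∈ Ioo 0 r, Summable fun n => c n * x ^ n) →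
      ∀ x ∈ Ioo 0 r, HasSum (fun n => c n * x ^ n) (g x) := by
    intro r hrR hs x hx
    have hana : AnalyticOnNhd ℝ (fun x => ∑' n, c n * x ^ n) (Ioo 0 r) := by
      intro y hy
      obtain ⟨w, hyw, hwr⟩ := exists_between hy.2
      have hw : 0 < w := hy.1.trans hyw
      refine analyticOnNhd_tsum hw (summable_norm_mul_pow hw.le (hs w ⟨hw, hwr⟩)) y ?_
      simpa [abs_of_pos hy.1] using hyw
    have hr : 0 < r := hx.1.trans hx.2
    have hm : 0 < min ε r := lt_min hε hr
    have heq := hana.eqOn_of_preconnected_of_eventuallyEq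
      (hg.mono (Ioo_subset_Ioo_right hrR)) isPreconnected_Ioo
      (z₀ := min ε r / 2) ⟨by positivity, by linarith [min_le_right ε r]⟩ (by
        filter_upwards [Ioo_mem_nhds (half_pos hm) (half_lt_self hm)] with y hy
        exact (h y ⟨hy.1, hy.2.trans_le (min_le_left _ _)⟩).tsum_eq) hx
    rw [← heq]
    exact (hs x hx).hasSum
  refine key R le_rfl ?_
  by_contra! hcon
  obtain ⟨x₁, hx₁, hns⟩ := hcon
  set S : Set ℝ := {y | 0 < y ∧ Summable fun n => c n * y ^ n}
  have hlt : ∀ y ∈ S, y < x₁ := fun y hy => by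
    by_contra! hle
    exact hns (hy.2.mul_pow_of_le hc hx₁.1.le hle)
  have hbdd : BddAbove S := ⟨x₁, fun y hy => (hlt y hy).le⟩
  have hmem : ε / 2 ∈ S := ⟨half_pos hε, (h _ ⟨half_pos hε, half_lt_self hε⟩).summable⟩
  have hpos : 0 < sSup S := (half_pos hε).trans_le (le_csSup hbdd hmem)
  have hltR : sSup S < R := (csSup_le ⟨_, hmem⟩ fun y hy => (hlt y hy).le).trans_lt hx₁.2
  obtain ⟨y, hy, hys⟩ := exists_summable_of_analyticAt hc hpos (hg _ ⟨hpos, hltR⟩)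
    (key _ hltR.le fun x hx => by
      obtain ⟨w, hwS, hxw⟩ := exists_lt_of_lt_csSup ⟨_, hmem⟩ hx.2
      exact hwS.2.mul_pow_of_le hc hx.1.le hxw.le)
  exact (le_csSup hbdd ⟨hpos.trans hy, hys⟩).not_gt hy

/-- Pringsheim's theorem along a parametrization `φ` of the positive axis, up to the endpoint. -/
theorem hasSum_comp_of_analyticOnNhd {c : ℕ → ℝ} (hc : ∀ n, 0 ≤ c n) {φ G : ℝ → ℝ} {ε : ℝ}
    (hε : 0 < ε) (hφ0 : φ 0 = 0) (hφ : AnalyticOnNhd ℝ φ (Ioo 0 1))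
    (hφ' : ∀ x ∈ Ioo (0 : ℝ) 1, deriv φ x ≠ 0) (hmono : StrictMonoOn φ (Icc 0 1))
    (hcont : ContinuousOn φ (Icc 0 1))
    (hG : AnalyticOnNhd ℝ G (Ioo 0 1)) (hG1 : ContinuousWithinAt G (Iio 1) 1)
    (h : ∀ x ∈ Ioo 0 ε, HasSum (fun n => c n * φ x ^ n) (G x)) :
    ∀ x ∈ Ioc 0 1, HasSum (fun n => c n * φ x ^ n) (G x) := by
  have h0 : (0 : ℝ) ∈ Icc (0 : ℝ) 1 := ⟨le_rfl, zero_le_one⟩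
  have h1 : (1 : ℝ) ∈ Icc (0 : ℝ) 1 := ⟨zero_le_one, le_rfl⟩
  have hsub : Ioo (0 : ℝ) 1 ⊆ Icc 0 1 := Ioo_subset_Icc_self
  have hinv : ∀ x ∈ Icc (0 : ℝ) 1, Function.invFunOn φ (Icc 0 1) (φ x) = x := fun x hx =>
    hmono.injOn (Function.invFunOn_mem ⟨x, hx, rfl⟩) hx (Function.invFunOn_eq ⟨x, hx, rfl⟩)
  have himg : ∀ y ∈ Ioo 0 (φ 1), ∃ x ∈ Ioo (0 : ℝ) 1, φ x = y := fun y hy => by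
    have := intermediate_value_Ioo zero_le_one hcont
    rw [hφ0] at this
    exact this hy
  have hpos : ∀ x ∈ Ioc (0 : ℝ) 1, 0 < φ x := fun x hx => by
    simpa [hφ0] using hmono h0 ⟨hx.1.le, hx.2⟩ hx.1
  have hg : AnalyticOnNhd ℝ (fun y => G (Function.invFunOn φ (Icc 0 1) y)) (Ioo 0 (φ 1)) := by
    intro y hy
    obtain ⟨x, hx, rfl⟩ := himg y hy
    rw [← analyticAt_comp_iff_of_deriv_ne_zero (hφ x hx) (hφ' x hx)]
    refine (hG x hx).congr ?_
    filter_upwards [isOpen_Ioo.mem_nhds hx] with w hw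
    simp [hinv w (hsub hw)]
  have hm : min ε 1 ∈ Ioc (0 : ℝ) 1 := ⟨lt_min hε one_pos, min_le_right _ _⟩
  have hP := hasSum_of_analyticOnNhd_Ioo hc (hpos _ hm) hg fun y hy => by
    obtain ⟨x, hx, rfl⟩ := himg y ⟨hy.1, hy.2.trans_le
      (hmono.monotoneOn ⟨hm.1.le, hm.2⟩ h1 hm.2)⟩
    have hlt := (hmono.lt_iff_lt (hsub hx) ⟨hm.1.le, hm.2⟩).1 hy.2
    rw [hinv x (hsub hx)]
    exact h x ⟨hx.1, hlt.trans_le (min_le_left _ _)⟩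
  have hopen : ∀ x ∈ Ioo (0 : ℝ) 1, HasSum (fun n => c n * φ x ^ n) (G x) := fun x hx => by
    have := hP (φ x) ⟨hpos x ⟨hx.1, hx.2.le⟩, hmono (hsub hx) h1 hx.2⟩
    rwa [hinv x (hsub hx)] at this
  have hnear : ∀ᶠ x in 𝓝[<] (1 : ℝ), x ∈ Ioo (0 : ℝ) 1 :=
    Ioo_mem_nhdsLT one_pos
  have hφ1 : Tendsto φ (𝓝[<] 1) (𝓝 (φ 1)) :=
    (hcont 1 h1).mono_left (nhdsWithin_le_of_mem (mem_of_superset hnear hsub))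
  have hle : ∀ s : Finset ℕ, ∑ n ∈ s, c n * φ 1 ^ n ≤ G 1 := fun s => by
    refine le_of_tendsto_of_tendsto
      (tendsto_finsetSum s fun n _ => (hφ1.pow n).const_mul (c n)) hG1 ?_
    filter_upwards [hnear] with x hx
    exact sum_le_hasSum s (fun n _ => mul_nonneg (hc n)
      (pow_nonneg (hpos x ⟨hx.1, hx.2.le⟩).le n)) (hopen x hx)
  have hsum1 : Summable fun n => c n * φ 1 ^ n :=
    summable_of_sum_le (fun n => mul_nonneg (hc n) (pow_nonneg (hpos 1 ⟨one_pos, le_rfl⟩).le n)) hle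
  intro x hx
  rcases hx.2.lt_or_eq with hx1 | rfl
  · exact hopen x ⟨hx.1, hx1⟩
  · have hge : G 1 ≤ ∑' n, c n * φ 1 ^ n := by
      refine le_of_tendsto hG1 ?_
      filter_upwards [hnear] with x hx
      refine hasSum_le (fun n => ?_) (hopen x hx) hsum1.hasSum
      have := hc n
      have := (hpos x ⟨hx.1, hx.2.le⟩).le
      have := hmono.monotoneOn (hsub hx) h1 hx.2.le
      gcongr
    rw [(hsum1.tsum_le_of_sum_le hle).antisymm hge |>.symm]
    exact hsum1.hasSum

end PowerSeries
section Constants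

theorem sqrt_seven_sq : Real.sqrt 7 ^ 2 = 7 := Real.sq_sqrt (by norm_num)

theorem tc_pos : 0 < tc := by
  unfold tc
  positivity

theorem uc_pos : 0 < uc := by
  have := tc_pos
  unfold uc
  positivity

theorem nuc_sq_sub_one : nuc ^ 2 - 1 = 4 * (7 + Real.sqrt 7) := by
  unfold nuc
  linear_combination 4 * sqrt_seven_sq

theorem nuc_mul_tc : (nuc ^ 2 - 1) * tc = 10 / 3 * uc := by
  rw [nuc_sq_sub_one, uc]
  ring

theorem tc_sq : tc ^ 2 * (64 * (7 + Real.sqrt 7) ^ 3) = 10 := by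
  have h : ((7 + Real.sqrt 7) ^ ((3 : ℝ) / 2)) ^ 2 = (7 + Real.sqrt 7) ^ 3 := by
    rw [← Real.rpow_natCast, ← Real.rpow_mul (by positivity), ← Real.rpow_natCast]
    norm_num
  have hne : (7 + Real.sqrt 7) ^ 3 ≠ 0 := by positivity
  rw [tc, div_pow, mul_pow, h, Real.sq_sqrt (by norm_num)]
  field_simp
  norm_num

theorem nuc_mul_uc_sq : (nuc ^ 2 - 1) * uc ^ 2 = 9 / 10 := by
  rw [nuc_sq_sub_one, uc]
  linear_combination (9 / 100) * tc_sq

theorem tc_eq : tc = 5 / 252 * (7 - Real.sqrt 7) * uc := by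
  rw [uc]
  linear_combination (1 / 42) * tc * sqrt_seven_sq

end Constants

section RealParametrization

open Filter Topology Set

/-- The restriction of `û` to the real axis. -/
noncomputable def uReal (H : ℝ) : ℝ := uc / 3 * H * (10 - 12 * H + 6 * H ^ 2 - H ^ 3)

/-- The restriction of `Ẑ₀` to the real axis. -/
noncomputable def Z0Real (H : ℝ) : ℝ :=
  (1 / 10) * (1 - (1 - Real.sqrt 7) * H + 3 * H ^ 2 - H ^ 3) * (10 - 12 * H + 6 * H ^ 2 - H ^ 3)

/-- The restriction of `Ẑ₁` to the real axis. -/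
noncomputable def Z1Real (H : ℝ) : ℝ :=
  (3 / (10 * uc)) *
    (Real.sqrt 7 - 1 + H - 3 * (4 - 3 * H + H ^ 2) / (10 - 12 * H + 6 * H ^ 2 - H ^ 3))

/-- The restriction of `Â` to the real axis. -/
noncomputable def AReal (H : ℝ) : ℝ :=
  (1 / 10) * ((3 : ℝ) / 2) ^ ((7 : ℝ) / 3) * (9 - 8 * H + 3 * H ^ 2) / (3 - 3 * H + H ^ 2) ^ 2

/-- The denominator of the rational parametrization of `Z(u, v)`. -/
def bivariateDenom (H K : ℝ) : ℝ :=
  10 - 12 * K + 6 * K ^ 2 - K ^ 3 - H * (12 - 9 * K + 3 * K ^ 2) + H ^ 2 * (6 - 3 * K + K ^ 2) - H ^ 3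

/-- The nontrivial factor of the numerator of the rational parametrization of
`Z(u, v) - Z(0, v)`. -/
def bivariateNum (H K : ℝ) : ℝ :=
  -22 + 31 * K - 21 * K ^ 2 + 7 * K ^ 3 - K ^ 4 + H * (48 - 48 * K + 22 * K ^ 2 - 3 * K ^ 3)
    + H ^ 2 * (-53 + 42 * K - 16 * K ^ 2 + K ^ 3) + H ^ 3 * (31 - 18 * K + 6 * K ^ 2)
    + H ^ 4 * (-9 + 3 * K - K ^ 2) + H ^ 5

/-- The rational parametrization of `Z(u, v)`. -/
noncomputable def ZReal (H K : ℝ) : ℝ :=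
  Z0Real K + H * (10 - 12 * H + 6 * H ^ 2 - H ^ 3) / 10 *
    (Real.sqrt 7 + bivariateNum H K / bivariateDenom H K)

/-- The rational parametrization of `Z(u, u_c)`. -/
noncomputable def ZcReal (H : ℝ) : ℝ :=
  Z0Real 1 + H * (10 - 12 * H + 6 * H ^ 2 - H ^ 3) / 10 *
    (Real.sqrt 7 + (-6 + 13 * H - 13 * H ^ 2 + 6 * H ^ 3 - H ^ 4) / (3 - 3 * H + H ^ 2))

/-- The equation satisfied by the value `S = Z(u, v)` at `u = û(H)`, `v = û(K)`. -/
def KernelEquation (H K S : ℝ) : Prop :=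
  (nuc * uReal K * uReal H - uReal H ^ 2
      - (nuc ^ 2 - 1) * tc * uReal K * (Z0Real H + uReal H * Z1Real K)) * (S - Z0Real K)
    = uReal H ^ 2 * (Z0Real K - Z0Real H)
      + (nuc ^ 2 - 1) * uReal H * uReal K * (uReal H ^ 2 - tc * Z0Real H * Z1Real K)

theorem uhat_ofReal (H : ℝ) : uhat H = (uReal H : ℂ) := by
  simp [uhat, uReal]

theorem Z0hat_ofReal (H : ℝ) : Z0hat H = (Z0Real H : ℂ) := by
  simp [Z0hat, Z0Real]

theorem Z1hat_ofReal (H : ℝ) : Z1hat H = (Z1Real H : ℂ) := by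
  simp [Z1hat, Z1Real]

theorem Ahat_ofReal (H : ℝ) : Ahat H = (AReal H : ℂ) := by
  simp [Ahat, AReal]

theorem cubic_pos {H : ℝ} (hH : H ≤ 1) : 0 < 10 - 12 * H + 6 * H ^ 2 - H ^ 3 := by
  have h : 0 < (2 - H) ^ 3 := pow_pos (by linarith) 3
  nlinarith

theorem quadratic_pos (H : ℝ) : 0 < 3 - 3 * H + H ^ 2 := by
  nlinarith [sq_nonneg (H - 3 / 2)]

theorem bivariateDenom_pos {H K : ℝ} (hH : H < 1) (hK : K ≤ 1) : 0 < bivariateDenom H K := by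
  obtain ⟨x, hx, rfl⟩ : ∃ x, 0 < x ∧ H = 1 - x := ⟨1 - H, by linarith, by ring⟩
  obtain ⟨y, hy, rfl⟩ : ∃ y, 0 ≤ y ∧ K = 1 - y := ⟨1 - K, by linarith, by ring⟩
  have h : bivariateDenom (1 - x) (1 - y) = x + y + x ^ 2 + x * y + y ^ 2 + x ^ 3 + x ^ 2 * y
      + x * y ^ 2 + y ^ 3 + x ^ 2 * y ^ 2 := by
    unfold bivariateDenom
    ring
  rw [h]
  positivity

theorem uReal_zero : uReal 0 = 0 := by simp [uReal]

theorem uReal_one : uReal 1 = uc := by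
  unfold uReal
  ring

theorem uReal_pos {H : ℝ} (h0 : 0 < H) (h1 : H ≤ 1) : 0 < uReal H := by
  have := cubic_pos h1
  have := uc_pos
  unfold uReal
  positivity

theorem continuous_uReal : Continuous uReal := by
  unfold uReal
  fun_prop

theorem hasDerivAt_uReal (H : ℝ) :
    HasDerivAt uReal (2 * uc / 3 * (1 - H) ^ 2 * (5 - 2 * H)) H := by
  have hid := hasDerivAt_id' H
  have h : HasDerivAt uReal _ H := (hid.const_mul (uc / 3)).mul ((((hid.const_mul 12).const_sub 10).add
    ((hid.pow 2).const_mul 6)).sub (hid.pow 3))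
  refine h.congr_deriv ?_
  simp
  ring

theorem deriv_uReal_pos {H : ℝ} (hH : H ∈ Ioo (0 : ℝ) 1) : 0 < deriv uReal H := by
  rw [(hasDerivAt_uReal H).deriv]
  have h1 : 0 < 1 - H := by linarith [hH.2]
  have h2 : 0 < 5 - 2 * H := by linarith [hH.2]
  have := uc_pos
  positivity

theorem strictMonoOn_uReal : StrictMonoOn uReal (Icc 0 1) :=
  strictMonoOn_of_deriv_pos (convex_Icc 0 1) continuous_uReal.continuousOn fun x hx =>
    deriv_uReal_pos (by rwa [interior_Icc] at hx)

theorem tendsto_uReal : Tendsto uReal (𝓝[>] 0) (𝓝[>] 0) := by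
  refine tendsto_nhdsWithin_iff.2 ⟨?_, ?_⟩
  · have h := continuous_uReal.tendsto 0
    rw [uReal_zero] at h
    exact h.mono_left nhdsWithin_le_nhds
  · filter_upwards [Ioo_mem_nhdsGT one_pos] with x hx
    exact uReal_pos hx.1 hx.2.le

theorem hasSum_uReal {c : ℕ → ℝ} (hc : ∀ n, 0 ≤ c n) {G : ℝ → ℝ} {ε : ℝ} (hε : 0 < ε)
    (hG : AnalyticOnNhd ℝ G (Ioc 0 1))
    (h : ∀ x ∈ Ioo 0 ε, HasSum (fun n => c n * uReal x ^ n) (G x)) :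
    ∀ x ∈ Ioc 0 1, HasSum (fun n => c n * uReal x ^ n) (G x) := by
  refine hasSum_comp_of_analyticOnNhd hc hε uReal_zero (fun x _ => ?_)
    (fun x hx => (deriv_uReal_pos hx).ne') strictMonoOn_uReal continuous_uReal.continuousOn
    (hG.mono Ioo_subset_Ioc_self)
    (hG 1 ⟨one_pos, le_rfl⟩).continuousAt.continuousWithinAt h
  unfold uReal
  fun_prop

theorem analyticOnNhd_Z0Real : AnalyticOnNhd ℝ Z0Real (Ioc 0 1) := fun x _ => by
  unfold Z0Real
  fun_prop

theorem analyticOnNhd_Z1Real : AnalyticOnNhd ℝ Z1Real (Ioc 0 1) := fun x hx => by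
  have := (cubic_pos hx.2).ne'
  unfold Z1Real
  fun_prop (disch := assumption)

theorem analyticOnNhd_AReal : AnalyticOnNhd ℝ AReal (Ioc 0 1) := fun x _ => by
  have := pow_ne_zero 2 (quadratic_pos x).ne'
  unfold AReal
  fun_prop (disch := assumption)

theorem analyticOnNhd_ZReal {H : ℝ} (hH : H < 1) : AnalyticOnNhd ℝ (ZReal H) (Ioc 0 1) :=
  fun x hx => by
  have := (bivariateDenom_pos hH hx.2).ne'
  unfold bivariateDenom at this
  unfold ZReal Z0Real bivariateNum bivariateDenom
  fun_prop (disch := assumption)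

theorem analyticOnNhd_ZcReal : AnalyticOnNhd ℝ ZcReal (Ioc 0 1) := fun x _ => by
  have := (quadratic_pos x).ne'
  unfold ZcReal
  fun_prop (disch := assumption)

theorem ZReal_one {H : ℝ} (hH : H < 1) : ZReal H 1 = ZcReal H := by
  have h1 : 1 - H ≠ 0 := by linarith
  have h2 := (quadratic_pos H).ne'
  have h3 : bivariateDenom H 1 = (1 - H) * (3 - 3 * H + H ^ 2) := by
    unfold bivariateDenom
    ring
  have h4 : bivariateNum H 1 = (1 - H) * (-6 + 13 * H - 13 * H ^ 2 + 6 * H ^ 3 - H ^ 4) := by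
    unfold bivariateNum
    ring
  rw [ZReal, ZcReal, h3, h4, mul_div_mul_left _ _ h1]

theorem uReal_mul_Z1Real {K : ℝ} (hK : K ≤ 1) :
    uReal K * Z1Real K = K / 10 * ((Real.sqrt 7 - 1 + K) * (10 - 12 * K + 6 * K ^ 2 - K ^ 3)
      - 3 * (4 - 3 * K + K ^ 2)) := by
  have h1 := (cubic_pos hK).ne'
  have h2 := uc_pos.ne'
  unfold uReal Z1Real
  generalize 10 - 12 * K + 6 * K ^ 2 - K ^ 3 = P at h1 ⊢
  field_simp

theorem kernel_eq {H K : ℝ} (hK : K ≤ 1) :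
    nuc * uReal K * uReal H - uReal H ^ 2
        - (nuc ^ 2 - 1) * tc * uReal K * (Z0Real H + uReal H * Z1Real K)
      = -(uc ^ 2 / 9) * (10 - 12 * H + 6 * H ^ 2 - H ^ 3) * (H ^ 2 + (K ^ 2 - 3 * K) * H + K)
        * bivariateDenom H K := by
  have h : (nuc ^ 2 - 1) * tc * uReal K * (Z0Real H + uReal H * Z1Real K)
      = ((nuc ^ 2 - 1) * tc) * (uReal K * Z0Real H + uReal H * (uReal K * Z1Real K)) := by ring
  rw [h, nuc_mul_tc, uReal_mul_Z1Real hK]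
  unfold uReal Z0Real bivariateDenom nuc
  ring

theorem kernel_rhs_eq {H K : ℝ} (hK : K ≤ 1) :
    uReal H ^ 2 * (Z0Real K - Z0Real H)
        + (nuc ^ 2 - 1) * uReal H * uReal K * (uReal H ^ 2 - tc * Z0Real H * Z1Real K)
      = -(uc ^ 2 / 9) * (10 - 12 * H + 6 * H ^ 2 - H ^ 3) * (H ^ 2 + (K ^ 2 - 3 * K) * H + K)
        * (H * (10 - 12 * H + 6 * H ^ 2 - H ^ 3) / 10 *
          (Real.sqrt 7 * bivariateDenom H K + bivariateNum H K)) := by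
  have h : (nuc ^ 2 - 1) * uReal H * uReal K * (uReal H ^ 2 - tc * Z0Real H * Z1Real K)
      = (nuc ^ 2 - 1) * uReal H * uReal K * uReal H ^ 2
        - ((nuc ^ 2 - 1) * tc) * uReal H * Z0Real H * (uReal K * Z1Real K) := by ring
  rw [h, nuc_mul_tc, uReal_mul_Z1Real hK]
  unfold uReal Z0Real bivariateDenom bivariateNum
  linear_combination
    (uc ^ 2 / 81 * H ^ 3 * K * (10 - 12 * H + 6 * H ^ 2 - H ^ 3) ^ 3
      * (10 - 12 * K + 6 * K ^ 2 - K ^ 3)) * nuc_mul_uc_sq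
    - (uc ^ 2 / 90 * H ^ 2 * K * (10 - 12 * H + 6 * H ^ 2 - H ^ 3) ^ 2
      * (10 - 12 * K + 6 * K ^ 2 - K ^ 3)) * sqrt_seven_sq

theorem eq_ZReal_of_kernel {H K S : ℝ} (hH0 : 0 < H) (hH : H < 1 / 3) (hK0 : 0 < K) (hK : K ≤ 1)
    (h : KernelEquation H K S) : S = ZReal H K := by
  rw [KernelEquation, kernel_eq hK, kernel_rhs_eq hK] at h
  have h1 := (cubic_pos (H := H) (by linarith)).ne'
  have h2 : H ^ 2 + (K ^ 2 - 3 * K) * H + K ≠ 0 := by nlinarith [mul_pos hK0 hH0, sq_nonneg K]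
  have h3 := (bivariateDenom_pos (H := H) (by linarith) hK).ne'
  have h4 : -(uc ^ 2 / 9) ≠ 0 := by have := uc_pos; simp [this.ne']
  rw [mul_assoc _ (bivariateDenom H K)] at h
  have h5 := mul_left_cancel₀ (mul_ne_zero (mul_ne_zero h4 h1) h2) h
  rw [ZReal]
  field_simp
  linear_combination 10 * h5

/-- The functional equation for `A` along the rational parametrization. -/
theorem AReal_identity {H a₀ a₁ : ℝ} (hH : H ≤ 1)
    (ha₀ : a₀ = (1 / 10) * ((3 : ℝ) / 2) ^ ((7 : ℝ) / 3)) (ha₁ : a₁ * (3 * uc) = a₀) :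
    AReal H * uReal H ^ 2 = tc * uc *
        ((AReal H - a₀ - a₁ * uReal H)
          + (Z1Real 1 * uReal H + (Z0Real H - 1)) * (AReal H - a₀)
          + a₁ * (uReal H * (ZcReal H - Z0Real 1 - (Z0Real H - 1))))
      + nuc * tc * (uReal H ^ 2 * (AReal H / uc + ((Z0Real 1 - 1) / uc + Z1Real H) * AReal H
          + a₀ * ((ZcReal H - Z0Real H) / uc - Z1Real H))) := by
  have h1 := (cubic_pos hH).ne'
  have h2 := (quadratic_pos H).ne'
  have h3 := uc_pos.ne'
  obtain rfl : a₁ = a₀ / (3 * uc) := by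
    field_simp
    linear_combination ha₁
  unfold ZcReal AReal
  rw [← ha₀, tc_eq]
  unfold uReal Z0Real Z1Real nuc
  have hs := sqrt_seven_sq
  generalize Real.sqrt 7 = s at hs ⊢
  norm_num only
  generalize hP : 10 - 12 * H + 6 * H ^ 2 - H ^ 3 = P at h1 ⊢
  generalize hQ : 3 - 3 * H + H ^ 2 = Q at h2 ⊢
  field_simp
  subst hP hQ
  linear_combination (60 * a₀ * (9 - 8 * H + 3 * H ^ 2) * (s - 6) * H ^ 2
    * (10 - 12 * H + 6 * H ^ 2 - H ^ 3) ^ 2) * hs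

end RealParametrization

section BivariateSeries

open Filter Topology Set

theorem HasSum.rows {z : ℕ → ℕ → ℝ} {u v S : ℝ}
    (h : HasSum (fun pq : ℕ × ℕ => z pq.1 pq.2 * u ^ pq.1 * v ^ pq.2) S) :
    HasSum (fun p => (∑' q, z p q * v ^ q) * u ^ p) S := by
  refine h.prod_fiberwise fun p => ?_
  have h1 := (h.summable.prod_factor p).hasSum
  have h2 : ∑' q, z p q * u ^ p * v ^ q = (∑' q, z p q * v ^ q) * u ^ p := by
    rw [← tsum_mul_right]
    exact tsum_congr fun q => by ring
  rwa [h2] at h1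

theorem HasSum.columns {z : ℕ → ℕ → ℝ} {u v S : ℝ}
    (h : HasSum (fun pq : ℕ × ℕ => z pq.1 pq.2 * u ^ pq.1 * v ^ pq.2) S) :
    HasSum (fun q => (∑' p, z p q * u ^ p) * v ^ q) S := by
  refine HasSum.rows (z := fun q p => z p q) ?_
  have h1 := (Equiv.prodComm ℕ ℕ).hasSum_iff.2 h
  refine h1.congr_fun fun pq => ?_
  simp only [Function.comp_apply, Equiv.prodComm_apply, Prod.fst_swap, Prod.snd_swap]
  ring

theorem Summable.row {z : ℕ → ℕ → ℝ} {u v : ℝ} (hu : u ≠ 0)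
    (h : Summable fun pq : ℕ × ℕ => z pq.1 pq.2 * u ^ pq.1 * v ^ pq.2) (p : ℕ) :
    Summable fun q => z p q * v ^ q := by
  have h1 := h.prod_factor p
  refine (summable_mul_left_iff (pow_ne_zero p hu)).1 (h1.congr fun q => ?_)
  ring

theorem Summable.column {z : ℕ → ℕ → ℝ} {u v : ℝ} (hv : v ≠ 0)
    (h : Summable fun pq : ℕ × ℕ => z pq.1 pq.2 * u ^ pq.1 * v ^ pq.2) (q : ℕ) :
    Summable fun p => z p q * u ^ p := by
  have h1 := h.prod_symm.prod_factor q
  exact (summable_mul_right_iff (pow_ne_zero q hv)).1 h1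

variable {z : ℕ → ℕ → ℝ} {ρ : ℝ}

theorem Z0Real_zero : Z0Real 0 = 1 := by
  norm_num [Z0Real]

theorem AReal_zero : AReal 0 = (1 / 10) * ((3 : ℝ) / 2) ^ ((7 : ℝ) / 3) := by
  unfold AReal
  ring

theorem continuous_Z0Real : Continuous Z0Real := by
  unfold Z0Real
  fun_prop

theorem hasSum_row_zero {K : ℝ} (h0 : Summable fun pq : ℕ × ℕ =>
      z pq.1 pq.2 * uReal 0 ^ pq.1 * uReal K ^ pq.2)
    (hker : KernelEquation 0 K (∑' pq : ℕ × ℕ, z pq.1 pq.2 * uReal 0 ^ pq.1 * uReal K ^ pq.2))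
    (hK0 : 0 < K) (hK1 : K ≤ 1) : HasSum (fun q => z 0 q * uReal K ^ q) (Z0Real K) := by
  have h1 := h0.hasSum.rows
  have h2 : ∑' pq : ℕ × ℕ, z pq.1 pq.2 * uReal 0 ^ pq.1 * uReal K ^ pq.2 = Z0Real K := by
    have hv := uReal_pos hK0 hK1
    have hn : 0 < nuc ^ 2 - 1 := by
      rw [nuc_sq_sub_one]
      positivity
    have ht := tc_pos
    rw [KernelEquation, uReal_zero, Z0Real_zero] at hker
    have h3 : (nuc ^ 2 - 1) * tc * uReal K ≠ 0 := by positivity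
    rw [uReal_zero]
    refine sub_eq_zero.1 (mul_left_cancel₀ h3 ?_)
    linear_combination -hker
  have h3 := h0.prod_factor 0
  have h4 := HasSum.unique h1 (hasSum_single 0 fun p hp => by simp [uReal_zero, hp])
  simp only [pow_zero, mul_one] at h3 h4
  rw [← h2, h4]
  exact h3.hasSum

theorem hasSum_row_one {K : ℝ} (hρ : 0 < ρ) (hρ1 : ρ ≤ 1) (hK0 : 0 < K) (hK1 : K ≤ 1)
    (hs : ∀ H ∈ Ico 0 ρ, Summable fun pq : ℕ × ℕ =>
      z pq.1 pq.2 * uReal H ^ pq.1 * uReal K ^ pq.2)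
    (hker : ∀ H ∈ Ico 0 ρ, KernelEquation H K
      (∑' pq : ℕ × ℕ, z pq.1 pq.2 * uReal H ^ pq.1 * uReal K ^ pq.2)) :
    HasSum (fun q => z 1 q * uReal K ^ q) (Z1Real K) := by
  have hv := uReal_pos hK0 hK1
  have hn : 0 < nuc ^ 2 - 1 := by
    rw [nuc_sq_sub_one]
    positivity
  have ht := tc_pos
  have h00 : (0 : ℝ) ∈ Ico 0 ρ := ⟨le_rfl, hρ⟩
  have hhalf : ρ / 2 ∈ Ico 0 ρ := ⟨by positivity, by linarith⟩
  have hu := uReal_pos (half_pos hρ) (by linarith)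
  set f : ℕ → ℝ := fun p => ∑' q, z p q * uReal K ^ q with hf
  have hf0 : f 0 = Z0Real K := (hasSum_row_zero (hs 0 h00) (hker 0 h00) hK0 hK1).tsum_eq
  have h1 := (tendsto_tsum_sub_div (c := f) hu (hs _ hhalf).hasSum.rows.summable).comp
    tendsto_uReal
  have hu0 : Tendsto uReal (𝓝[>] 0) (𝓝 0) := tendsto_uReal.mono_right nhdsWithin_le_nhds
  have hZ0 : Tendsto Z0Real (𝓝[>] 0) (𝓝 1) := by
    rw [← Z0Real_zero]
    exact continuous_Z0Real.continuousAt.mono_left nhdsWithin_le_nhds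
  have h2 : Tendsto (fun H => (nuc * uReal K * uReal H - uReal H ^ 2
      - (nuc ^ 2 - 1) * tc * uReal K * (Z0Real H + uReal H * Z1Real K)) *
      ((∑' n, f n * uReal H ^ n - f 0) / uReal H)) (𝓝[>] 0)
      (𝓝 ((nuc * uReal K * 0 - 0 ^ 2 - (nuc ^ 2 - 1) * tc * uReal K * (1 + 0 * Z1Real K)) * f 1)) :=
    (((hu0.const_mul _).sub (hu0.pow 2)).sub ((hZ0.add (hu0.mul_const _)).const_mul _)).mul h1
  have h3 : Tendsto (fun H => uReal H * (Z0Real K - Z0Real H)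
      + (nuc ^ 2 - 1) * uReal K * (uReal H ^ 2 - tc * Z0Real H * Z1Real K)) (𝓝[>] 0)
      (𝓝 (0 * (Z0Real K - 1) + (nuc ^ 2 - 1) * uReal K * (0 ^ 2 - tc * 1 * Z1Real K))) :=
    (hu0.mul (hZ0.const_sub _)).add
      (((hu0.pow 2).sub ((hZ0.const_mul _).mul_const _)).const_mul _)
  have h4 := tendsto_nhds_unique (h2.congr' ?_) h3
  · have h5 : (nuc ^ 2 - 1) * tc * uReal K ≠ 0 := by positivity
    have h6 : f 1 = Z1Real K := by
      refine mul_left_cancel₀ h5 ?_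
      linear_combination -h4
    rw [← h6]
    exact ((hs _ hhalf).row hu.ne' 1).hasSum
  · filter_upwards [Ioo_mem_nhdsGT hρ] with H hH
    have hH' : H ∈ Ico 0 ρ := ⟨hH.1.le, hH.2⟩
    have hp := uReal_pos hH.1 (hH.2.le.trans hρ1)
    have h5 := hker H hH'
    rw [KernelEquation, ← (hs H hH').hasSum.rows.tsum_eq] at h5
    rw [hf0]
    field_simp
    linear_combination h5

theorem hasSum_prod_critical (hz : ∀ p q, 0 ≤ z p q) (hρ : 0 < ρ) (hρ1 : ρ ≤ 1)
    (hs : ∀ H ∈ Ico 0 ρ, ∀ K ∈ Ico 0 ρ, Summable fun pq : ℕ × ℕ =>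
      z pq.1 pq.2 * uReal H ^ pq.1 * uReal K ^ pq.2)
    (hker : ∀ H ∈ Ico 0 ρ, ∀ K ∈ Ico 0 ρ, KernelEquation H K
      (∑' pq : ℕ × ℕ, z pq.1 pq.2 * uReal H ^ pq.1 * uReal K ^ pq.2))
    {H : ℝ} (hH : H ∈ Ioo 0 (min ρ (1 / 3))) :
    HasSum (fun pq : ℕ × ℕ => z pq.1 pq.2 * uReal H ^ pq.1 * uc ^ pq.2) (ZcReal H) := by
  have hH3 : H < 1 / 3 := hH.2.trans_le (min_le_right _ _)
  have hHρ : H ∈ Ico 0 ρ := ⟨hH.1.le, hH.2.trans_le (min_le_left _ _)⟩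
  have hu := uReal_pos hH.1 (by linarith)
  have huc := uc_pos
  have hc : ∀ q, 0 ≤ ∑' p, z p q * uReal H ^ p := fun q =>
    tsum_nonneg fun p => mul_nonneg (hz p q) (by positivity)
  have h1 : ∀ K ∈ Ioo 0 ρ, HasSum (fun q => (∑' p, z p q * uReal H ^ p) * uReal K ^ q)
      (ZReal H K) := fun K hK => by
    have hK' : K ∈ Ico 0 ρ := ⟨hK.1.le, hK.2⟩
    rw [← eq_ZReal_of_kernel hH.1 hH3 hK.1 (hK.2.le.trans hρ1) (hker H hHρ K hK')]
    exact (hs H hHρ K hK').hasSum.columns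
  have h2 := hasSum_uReal hc hρ (analyticOnNhd_ZReal (by linarith)) h1 1 ⟨one_pos, le_rfl⟩
  rw [uReal_one, ZReal_one (by linarith)] at h2
  have h3 : ∀ q, Summable fun p => z p q * uReal H ^ p := by
    have hhalf : ρ / 2 ∈ Ico 0 ρ := ⟨by positivity, by linarith⟩
    exact (hs H hHρ _ hhalf).column (uReal_pos (half_pos hρ) (by linarith)).ne'
  have h4 : Summable fun pq : ℕ × ℕ => z pq.1 pq.2 * uReal H ^ pq.1 * uc ^ pq.2 := by
    refine summable_prod_swap_of_nonneg (fun pq => ?_) (fun q => ?_) ?_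
    · have := hz pq.1 pq.2
      positivity
    · exact (h3 q).mul_right (uc ^ q)
    · simpa only [tsum_mul_right] using h2.summable
  have h5 := h4.hasSum
  rwa [h5.columns.unique h2] at h5

/-- The series `Z(u, u_c)` along the parametrization. -/
theorem hasSum_ZcReal (hz : ∀ p q, 0 ≤ z p q) (hρ : 0 < ρ) (hρ1 : ρ ≤ 1)
    (hs : ∀ H ∈ Ico 0 ρ, ∀ K ∈ Ico 0 ρ, Summable fun pq : ℕ × ℕ =>
      z pq.1 pq.2 * uReal H ^ pq.1 * uReal K ^ pq.2)
    (hker : ∀ H ∈ Ico 0 ρ, ∀ K ∈ Ico 0 ρ, KernelEquation H K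
      (∑' pq : ℕ × ℕ, z pq.1 pq.2 * uReal H ^ pq.1 * uReal K ^ pq.2)) :
    ∀ H ∈ Ioc 0 1, HasSum (fun p => (∑' q, z p q * uc ^ q) * uReal H ^ p) (ZcReal H) := by
  have huc := uc_pos
  refine hasSum_uReal (fun p => tsum_nonneg fun q => mul_nonneg (hz p q) (by positivity))
    (ε := min ρ (1 / 3)) (by positivity) analyticOnNhd_ZcReal fun H hH => ?_
  exact (hasSum_prod_critical hz hρ hρ1 hs hker hH).rows

theorem summable_prod_critical (hz : ∀ p q, 0 ≤ z p q) (hρ : 0 < ρ) (hρ1 : ρ ≤ 1)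
    (hs : ∀ H ∈ Ico 0 ρ, ∀ K ∈ Ico 0 ρ, Summable fun pq : ℕ × ℕ =>
      z pq.1 pq.2 * uReal H ^ pq.1 * uReal K ^ pq.2)
    (hker : ∀ H ∈ Ico 0 ρ, ∀ K ∈ Ico 0 ρ, KernelEquation H K
      (∑' pq : ℕ × ℕ, z pq.1 pq.2 * uReal H ^ pq.1 * uReal K ^ pq.2)) :
    Summable fun pq : ℕ × ℕ => z pq.1 pq.2 * uc ^ pq.1 * uc ^ pq.2 := by
  have huc := uc_pos
  have h1 := (hasSum_ZcReal hz hρ hρ1 hs hker 1 ⟨one_pos, le_rfl⟩).summable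
  rw [uReal_one] at h1
  have hδ : 0 < min ρ (1 / 3) := by positivity
  have hδ3 : min ρ (1 / 3) ≤ 1 / 3 := min_le_right _ _
  have h2 := (hasSum_prod_critical hz hρ hρ1 hs hker
    (H := min ρ (1 / 3) / 2) ⟨by positivity, by linarith⟩).summable.row
    (uReal_pos (half_pos hδ) (by linarith)).ne'
  refine (summable_prod_of_nonneg fun pq => ?_).2 ⟨fun p => ?_, ?_⟩
  · have := hz pq.1 pq.2
    simp only [Pi.zero_apply]
    positivity
  · refine ((h2 p).mul_right (uc ^ p)).congr fun q => ?_
    ring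
  · refine h1.congr fun p => ?_
    rw [← tsum_mul_right]
    exact tsum_congr fun q => by ring

theorem linear_coeff_AReal {a : ℕ → ℝ} (hρ : 0 < ρ) (hρ1 : ρ ≤ 1)
    (ha : ∀ H ∈ Ico 0 ρ, HasSum (fun p => a p * uReal H ^ p) (AReal H)) :
    a 0 = (1 / 10) * ((3 : ℝ) / 2) ^ ((7 : ℝ) / 3) ∧ a 1 * (3 * uc) = a 0 := by
  have huc := uc_pos
  have h0 : a 0 = AReal 0 := by
    have h1 := ha 0 ⟨le_rfl, hρ⟩
    have h2 := h1.unique (hasSum_single 0 fun p hp => by simp [uReal_zero, hp])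
    simpa using h2.symm
  refine ⟨h0.trans AReal_zero, ?_⟩
  have hu := uReal_pos (half_pos hρ) (by linarith)
  have h1 := (tendsto_tsum_sub_div hu (ha _ ⟨by positivity, by linarith⟩).summable).comp
    tendsto_uReal
  have h2 : Tendsto (fun H : ℝ => 3 * a 0 / (uc * (3 - 3 * H + H ^ 2) ^ 2)) (𝓝[>] 0)
      (𝓝 (3 * a 0 / (uc * (3 - 3 * 0 + 0 ^ 2) ^ 2))) := by
    have : ContinuousAt (fun H : ℝ => 3 * a 0 / (uc * (3 - 3 * H + H ^ 2) ^ 2)) 0 := by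
      have : uc * (3 - 3 * (0 : ℝ) + 0 ^ 2) ^ 2 ≠ 0 := by norm_num [huc.ne']
      fun_prop (disch := assumption)
    exact this.tendsto.mono_left nhdsWithin_le_nhds
  have h3 := tendsto_nhds_unique (h1.congr' ?_) h2
  · rw [h3]
    field_simp
    ring
  · filter_upwards [Ioo_mem_nhdsGT hρ] with H hH
    have hp := uReal_pos hH.1 (hH.2.le.trans hρ1)
    have hQ := quadratic_pos H
    have hA : AReal H = a 0 * (9 - 8 * H + 3 * H ^ 2) / (3 - 3 * H + H ^ 2) ^ 2 := by
      rw [h0, AReal_zero, AReal]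
    simp only [Function.comp_apply]
    rw [(ha H ⟨hH.1.le, hH.2⟩).tsum_eq, hA, div_eq_div_iff hp.ne' (by positivity)]
    generalize hq : 3 - 3 * H + H ^ 2 = Q at hQ ⊢
    field_simp
    subst hq
    unfold uReal
    ring

end BivariateSeries

section FunctionalEquation

open Filter Topology Set

theorem eqOn_closedBall_of_eq_uReal {f g : ℂ → ℂ} (hf : AnalyticOnNhd ℂ f (Metric.ball 0 uc))
    (hg : AnalyticOnNhd ℂ g (Metric.ball 0 uc)) (hfc : ContinuousOn f (Metric.closedBall 0 uc))
    (hgc : ContinuousOn g (Metric.closedBall 0 uc))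
    (h : ∀ H ∈ Ioc (0 : ℝ) 1, f (uReal H) = g (uReal H)) :
    EqOn f g (Metric.closedBall 0 uc) := by
  have h1 : Tendsto (fun H : ℝ => (uReal H : ℂ)) (𝓝[>] 0) (𝓝[≠] 0) := by
    refine tendsto_nhdsWithin_iff.2 ⟨?_, ?_⟩
    · have h2 := (Complex.continuous_ofReal.tendsto 0).comp
        (tendsto_uReal.mono_right nhdsWithin_le_nhds)
      simpa [Function.comp_def] using h2
    · filter_upwards [Ioo_mem_nhdsGT one_pos] with x hx
      simpa using (uReal_pos hx.1 hx.2.le).ne'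
  have h2 : ∃ᶠ x in 𝓝[≠] (0 : ℂ), f x = g x := by
    refine h1.frequently (Eventually.frequently ?_)
    filter_upwards [Ioo_mem_nhdsGT one_pos] with x hx
    exact h x ⟨hx.1, hx.2.le⟩
  have h3 := hf.eqOn_of_preconnected_of_frequently_eq hg (convex_ball 0 uc).isPreconnected
    (Metric.mem_ball_self uc_pos) h2
  exact h3.of_subset_closure hfc hgc Metric.ball_subset_closedBall
    (closure_ball (0 : ℂ) uc_pos.ne').ge

variable {c : ℕ → ℝ} {G : ℝ → ℝ}

theorem summable_norm_ofReal_mul_pow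
    (h : ∀ H ∈ Ioc (0 : ℝ) 1, HasSum (fun p => c p * uReal H ^ p) (G H)) :
    Summable fun p => ‖(c p : ℂ)‖ * uc ^ p := by
  have h1 := (h 1 ⟨one_pos, le_rfl⟩).summable
  rw [uReal_one] at h1
  simpa using summable_norm_mul_pow uc_pos.le h1

theorem tsum_ofReal_mul_pow
    (h : ∀ H ∈ Ioc (0 : ℝ) 1, HasSum (fun p => c p * uReal H ^ p) (G H)) :
    ∀ H ∈ Ioc (0 : ℝ) 1, ∑' p, (c p : ℂ) * (uReal H : ℂ) ^ p = (G H : ℂ) := fun H hH => by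
  rw [← (h H hH).tsum_eq]
  push_cast
  rfl

/-- The functional equation for `A`, as an identity between analytic functions on the disk. -/
theorem tsum_functional_equation {a b₀ b₁ b : ℕ → ℝ}
    (ha : ∀ H ∈ Ioc (0 : ℝ) 1, HasSum (fun p => a p * uReal H ^ p) (AReal H))
    (hb₀ : ∀ H ∈ Ioc (0 : ℝ) 1, HasSum (fun p => b₀ p * uReal H ^ p) (Z0Real H))
    (hb₁ : ∀ H ∈ Ioc (0 : ℝ) 1, HasSum (fun p => b₁ p * uReal H ^ p) (Z1Real H))
    (hb : ∀ H ∈ Ioc (0 : ℝ) 1, HasSum (fun p => b p * uReal H ^ p) (ZcReal H))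
    (ha₀ : a 0 = (1 / 10) * ((3 : ℝ) / 2) ^ ((7 : ℝ) / 3)) (ha₁ : a 1 * (3 * uc) = a 0)
    {u : ℂ} (hu : ‖u‖ ≤ uc) :
    (∑' p, (a p : ℂ) * u ^ p) * u ^ 2 = tc * uc *
        ((∑' p, (a p : ℂ) * u ^ p - a 0 - a 1 * u)
          + (Z1Real 1 * u + (∑' p, (b₀ p : ℂ) * u ^ p - 1)) * (∑' p, (a p : ℂ) * u ^ p - a 0)
          + a 1 * (u * (∑' p, (b p : ℂ) * u ^ p - Z0Real 1 - (∑' p, (b₀ p : ℂ) * u ^ p - 1))))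
      + nuc * tc * (u ^ 2 * ((∑' p, (a p : ℂ) * u ^ p) / uc
          + ((Z0Real 1 - 1) / uc + ∑' p, (b₁ p : ℂ) * u ^ p) * ∑' p, (a p : ℂ) * u ^ p
          + a 0 * ((∑' p, (b p : ℂ) * u ^ p - ∑' p, (b₀ p : ℂ) * u ^ p) / uc
            - ∑' p, (b₁ p : ℂ) * u ^ p))) := by
  have sa := summable_norm_ofReal_mul_pow ha
  have sb₀ := summable_norm_ofReal_mul_pow hb₀
  have sb₁ := summable_norm_ofReal_mul_pow hb₁
  have sb := summable_norm_ofReal_mul_pow hb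
  have da := analyticOnNhd_tsum uc_pos sa
  have db₀ := analyticOnNhd_tsum uc_pos sb₀
  have db₁ := analyticOnNhd_tsum uc_pos sb₁
  have db := analyticOnNhd_tsum uc_pos sb
  have ca := continuousOn_tsum_closedBall sa
  have cb₀ := continuousOn_tsum_closedBall sb₀
  have cb₁ := continuousOn_tsum_closedBall sb₁
  have cb := continuousOn_tsum_closedBall sb
  have ta := tsum_ofReal_mul_pow ha
  have tb₀ := tsum_ofReal_mul_pow hb₀
  have tb₁ := tsum_ofReal_mul_pow hb₁
  have tb := tsum_ofReal_mul_pow hb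
  generalize hA : (fun u : ℂ => ∑' p, (a p : ℂ) * u ^ p) = A at da ca
  generalize hB₀ : (fun u : ℂ => ∑' p, (b₀ p : ℂ) * u ^ p) = B₀ at db₀ cb₀
  generalize hB₁ : (fun u : ℂ => ∑' p, (b₁ p : ℂ) * u ^ p) = B₁ at db₁ cb₁
  generalize hB : (fun u : ℂ => ∑' p, (b p : ℂ) * u ^ p) = B at db cb
  simp only [funext_iff] at hA hB₀ hB₁ hB
  simp only [hA, hB₀, hB₁, hB] at ta tb₀ tb₁ tb ⊢
  have huc : (uc : ℂ) ≠ 0 := by exact_mod_cast uc_pos.ne'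
  refine eqOn_closedBall_of_eq_uReal (f := fun u => A u * u ^ 2) (g := fun u => tc * uc *
        ((A u - a 0 - a 1 * u) + (Z1Real 1 * u + (B₀ u - 1)) * (A u - a 0)
          + a 1 * (u * (B u - Z0Real 1 - (B₀ u - 1))))
      + nuc * tc * (u ^ 2 * (A u / uc + ((Z0Real 1 - 1) / uc + B₁ u) * A u
          + a 0 * ((B u - B₀ u) / uc - B₁ u)))) ?_ ?_ ?_ ?_ ?_ (by simpa using hu)
  · intro x hx
    have := da x hx
    fun_prop
  · intro x hx
    have := da x hx
    have := db x hx
    have := db₀ x hx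
    have := db₁ x hx
    fun_prop (disch := assumption)
  · fun_prop
  · fun_prop (disch := simpa using huc)
  · intro H hH
    simp only [ta H hH, tb H hH, tb₀ H hH, tb₁ H hH]
    exact_mod_cast AReal_identity hH.2 ha₀ ha₁

end FunctionalEquation

/-- the coefficient identity obtained from the singular expansion, valid for
every `u` with `0 < |u| ≤ u_c`.  Here `Z₀(u), Z₁(u), A(u)` are given by their absolutely
convergent power series, `Z(u,u_c) = Σ_{p,q} z_{p,q} u^p u_c^q`, `Z₀(u_c) = Ẑ₀(1)`,
`Z₁(u_c) = Ẑ₁(1)`, and the discrete derivatives are `ΔZ₀(u) = (Z₀(u) − 1)/u`,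
`ΔA(u) = (A(u) − a₀)/u`, `Δ²A(u) = (A(u) − a₀ − a₁u)/u²`,
`ΔZ(u,u_c) = (Z(u,u_c) − Z(0,u_c))/u`. -/
theorem statement9
    (ρ : ℝ) (hρ : 0 < ρ)
    (z : ℕ → ℕ → ℝ) (hz_nonneg : ∀ p q, 0 ≤ z p q)
    -- `z p 0` are the Taylor coefficients of `Z₀ = Ẑ₀ ∘ û⁻¹` at `0`
    (hz0 : ∀ H : ℂ, ‖H‖ < ρ →
      HasSum (fun p : ℕ => (z p 0 : ℂ) * uhat H ^ p) (Z0hat H))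
    -- `z p q` are the Taylor coefficients at `(0,0)` of the solution `Z(u,v)` of the
    -- algebraic equation, expressed through the parametrization `u = û(H)`, `v = û(K)`
    (hZ : ∀ H K : ℂ, ‖H‖ < ρ → ‖K‖ < ρ → ∃ ZHK : ℂ,
      HasSum (fun pq : ℕ × ℕ => (z pq.1 pq.2 : ℂ) * uhat H ^ pq.1 * uhat K ^ pq.2) ZHK ∧
      ((nuc : ℂ) * uhat K * uhat H - uhat H ^ 2
          - ((nuc : ℂ) ^ 2 - 1) * (tc : ℂ) * uhat K * (Z0hat H + uhat H * Z1hat K))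
          * (ZHK - Z0hat K)
        = uhat H ^ 2 * (Z0hat K - Z0hat H)
          + ((nuc : ℂ) ^ 2 - 1) * uhat H * uhat K * (uhat H ^ 2 - (tc : ℂ) * Z0hat H * Z1hat K))
    (z1 : ℕ → ℝ)
    -- `z1 p` are the Taylor coefficients of `Z₁ = Ẑ₁ ∘ û⁻¹` at `0`
    (hz1 : ∀ H : ℂ, ‖H‖ < ρ →
      HasSum (fun p : ℕ => (z1 p : ℂ) * uhat H ^ p) (Z1hat H))
    (a : ℕ → ℝ) (ha_pos : ∀ p, 0 < a p)
    -- `a p` are the Taylor coefficients of `A = Â ∘ û⁻¹` at `0`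
    (hA : ∀ H : ℂ, ‖H‖ < ρ →
      HasSum (fun p : ℕ => (a p : ℂ) * uhat H ^ p) (Ahat H))
    :
    ∀ u : ℂ, 0 < ‖u‖ → ‖u‖ ≤ uc →
      Summable (fun pq : ℕ × ℕ => ‖(z pq.1 pq.2 : ℂ) * u ^ pq.1 * ((uc : ℝ) : ℂ) ^ pq.2‖) ∧
      Summable (fun p : ℕ => ‖(z p 0 : ℂ) * u ^ p‖) ∧
      Summable (fun p : ℕ => ‖(z1 p : ℂ) * u ^ p‖) ∧
      Summable (fun p : ℕ => ‖(a p : ℂ) * u ^ p‖) ∧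
      (∑' p : ℕ, (a p : ℂ) * u ^ p) =
        (tc : ℂ) * (uc : ℂ) *
          ( ((∑' p : ℕ, (a p : ℂ) * u ^ p) - (a 0 : ℂ) - (a 1 : ℂ) * u) / u ^ 2
            + (Z1hat 1 + ((∑' p : ℕ, (z p 0 : ℂ) * u ^ p) - 1) / u)
                * (((∑' p : ℕ, (a p : ℂ) * u ^ p) - (a 0 : ℂ)) / u)
            + (a 1 : ℂ) *
                ( ((∑' pq : ℕ × ℕ, (z pq.1 pq.2 : ℂ) * u ^ pq.1 * (uc : ℂ) ^ pq.2)
                    - (∑' q : ℕ, (z 0 q : ℂ) * (uc : ℂ) ^ q)) / u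
                  - ((∑' p : ℕ, (z p 0 : ℂ) * u ^ p) - 1) / u ) )
        + (nuc : ℂ) * (tc : ℂ) *
          ( (∑' p : ℕ, (a p : ℂ) * u ^ p) / (uc : ℂ)
            + ((Z0hat 1 - 1) / (uc : ℂ) + (∑' p : ℕ, (z1 p : ℂ) * u ^ p))
                * (∑' p : ℕ, (a p : ℂ) * u ^ p)
            + (a 0 : ℂ) *
                ( ((∑' pq : ℕ × ℕ, (z pq.1 pq.2 : ℂ) * u ^ pq.1 * (uc : ℂ) ^ pq.2)
                    - (∑' p : ℕ, (z p 0 : ℂ) * u ^ p)) / (uc : ℂ)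
                  - (∑' p : ℕ, (z1 p : ℂ) * u ^ p) ) ) := by
  have huc := uc_pos
  have hσ : 0 < min ρ 1 := by positivity
  have hσ1 : min ρ 1 ≤ 1 := min_le_right _ _
  have hnorm : ∀ H ∈ Set.Ico 0 (min ρ 1), ‖(H : ℂ)‖ < ρ := fun H hH => by
    simpa [abs_of_nonneg hH.1] using hH.2.trans_le (min_le_left _ _)
  have hIoo : ∀ H ∈ Set.Ioo 0 (min ρ 1), H ∈ Set.Ico 0 (min ρ 1) := fun H hH => ⟨hH.1.le, hH.2⟩
  have hz0' : ∀ H ∈ Set.Ioc (0 : ℝ) 1, HasSum (fun p => z p 0 * uReal H ^ p) (Z0Real H) := by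
    refine hasSum_uReal (fun p => hz_nonneg p 0) hσ analyticOnNhd_Z0Real fun H hH => ?_
    have h := hz0 H (hnorm H (hIoo H hH))
    rw [uhat_ofReal, Z0hat_ofReal] at h
    exact_mod_cast h
  have hA' : ∀ H ∈ Set.Ico 0 (min ρ 1), HasSum (fun p => a p * uReal H ^ p) (AReal H) :=
    fun H hH => by
    have h := hA H (hnorm H hH)
    rw [uhat_ofReal, Ahat_ofReal] at h
    exact_mod_cast h
  have hA'' := hasSum_uReal (fun p => (ha_pos p).le) hσ analyticOnNhd_AReal
    fun H hH => hA' H (hIoo H hH)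
  have hZ' : ∀ H ∈ Set.Ico 0 (min ρ 1), ∀ K ∈ Set.Ico 0 (min ρ 1),
      (Summable fun pq : ℕ × ℕ => z pq.1 pq.2 * uReal H ^ pq.1 * uReal K ^ pq.2) ∧
      KernelEquation H K
        (∑' pq : ℕ × ℕ, z pq.1 pq.2 * uReal H ^ pq.1 * uReal K ^ pq.2) := by
    intro H hH K hK
    obtain ⟨S, hS, hker⟩ := hZ H K (hnorm H hH) (hnorm K hK)
    simp only [uhat_ofReal, Z0hat_ofReal, Z1hat_ofReal] at hS hker
    have hS' : HasSum (fun pq : ℕ × ℕ =>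
        ((z pq.1 pq.2 * uReal H ^ pq.1 * uReal K ^ pq.2 : ℝ) : ℂ)) S := by
      simpa using hS
    have hsum := Complex.summable_ofReal.1 hS'.summable
    refine ⟨hsum, ?_⟩
    rw [← hS'.tsum_eq, ← Complex.ofReal_tsum] at hker
    exact_mod_cast hker
  have hs := fun H hH K hK => (hZ' H hH K hK).1
  have hker := fun H hH K hK => (hZ' H hH K hK).2
  have hzero : (0 : ℝ) ∈ Set.Ico 0 (min ρ 1) := ⟨le_rfl, hσ⟩
  have hrow0 := hasSum_uReal (hz_nonneg 0) hσ analyticOnNhd_Z0Real fun K hK =>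
    hasSum_row_zero (hs 0 hzero K (hIoo K hK)) (hker 0 hzero K (hIoo K hK)) hK.1
      (hK.2.le.trans hσ1)
  have hrow1 : ∀ K ∈ Set.Ioo 0 (min ρ 1), HasSum (fun q => z 1 q * uReal K ^ q) (Z1Real K) :=
    fun K hK => hasSum_row_one hσ hσ1 hK.1 (hK.2.le.trans hσ1)
      (fun H hH => hs H hH K (hIoo K hK)) fun H hH => hker H hH K (hIoo K hK)
  have hz1R : ∀ K ∈ Set.Ioo 0 (min ρ 1), HasSum (fun q => z1 q * uReal K ^ q) (Z1Real K) :=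
    fun K hK => by
    have h := hz1 K (hnorm K (hIoo K hK))
    rw [uhat_ofReal, Z1hat_ofReal] at h
    exact_mod_cast h
  obtain rfl : z1 = z 1 := by
    have hhalf : min ρ 1 / 2 ∈ Set.Ioo 0 (min ρ 1) := ⟨half_pos hσ, half_lt_self hσ⟩
    refine coeff_eq_of_frequently_eq (uReal_pos hhalf.1 (hhalf.2.le.trans hσ1))
      (hz1R _ hhalf).summable (hrow1 _ hhalf).summable
      (tendsto_uReal.frequently (Filter.Eventually.frequently ?_))
    filter_upwards [Ioo_mem_nhdsGT hσ] with K hK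
    rw [(hz1R K hK).tsum_eq, (hrow1 K hK).tsum_eq]
  have hz1' := hasSum_uReal (hz_nonneg 1) hσ analyticOnNhd_Z1Real hrow1
  have hZc := hasSum_ZcReal hz_nonneg hσ hσ1 hs hker
  have hprod := summable_prod_critical hz_nonneg hσ hσ1 hs hker
  obtain ⟨ha0, ha1⟩ := linear_coeff_AReal hσ hσ1 hA'
  intro u hu0 hu
  have hbound {c : ℕ → ℝ} (hc : Summable fun p => ‖(c p : ℂ)‖ * uc ^ p) :
      Summable fun p => ‖(c p : ℂ) * u ^ p‖ := by
    refine hc.of_nonneg_of_le (fun p => norm_nonneg _) fun p => ?_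
    rw [norm_mul, norm_pow]
    gcongr
  have hprod' : Summable fun pq : ℕ × ℕ =>
      ‖(z pq.1 pq.2 : ℂ) * u ^ pq.1 * ((uc : ℝ) : ℂ) ^ pq.2‖ := by
    refine hprod.of_nonneg_of_le (fun p => norm_nonneg _) fun pq => ?_
    have := hz_nonneg pq.1 pq.2
    rw [norm_mul, norm_mul, norm_pow, norm_pow, Complex.norm_real, Complex.norm_real,
      Real.norm_of_nonneg this, Real.norm_of_nonneg huc.le]
    gcongr
  refine ⟨hprod', hbound (summable_norm_ofReal_mul_pow hz0'),
    hbound (summable_norm_ofReal_mul_pow hz1'), hbound (summable_norm_ofReal_mul_pow hA''), ?_⟩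
  have hdouble : ∑' pq : ℕ × ℕ, (z pq.1 pq.2 : ℂ) * u ^ pq.1 * (uc : ℂ) ^ pq.2
      = ∑' p, ((∑' q, z p q * uc ^ q : ℝ) : ℂ) * u ^ p := by
    rw [hprod'.of_norm.tsum_prod]
    refine tsum_congr fun p => ?_
    push_cast
    rw [← tsum_mul_right]
    exact tsum_congr fun q => by ring
  have hedge : ∑' q, (z 0 q : ℂ) * (uc : ℂ) ^ q = (Z0Real 1 : ℂ) := by
    have h := tsum_ofReal_mul_pow hrow0 1 ⟨one_pos, le_rfl⟩
    rwa [uReal_one] at h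
  have hmain := tsum_functional_equation hA'' hz0' hz1' hZc ha0 ha1 hu
  have h0 := Z0hat_ofReal 1
  have h1 := Z1hat_ofReal 1
  rw [Complex.ofReal_one] at h0 h1
  rw [hdouble, hedge, h0, h1]
  have hune : u ≠ 0 := norm_pos_iff.1 hu0
  have hucne : (uc : ℂ) ≠ 0 := by exact_mod_cast huc.ne'
  refine mul_right_cancel₀ (pow_ne_zero 2 hune) (hmain.trans ?_)
  field_simp
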